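/- Let g₁ and g₂ be commuting homeomorphisms of ℝ² such that the ℤ²-action φ(n₁,n₂) = g₁^{n₁} ∘ g₂^{n₂} is minimal, and suppose that the composition g₁ ∘ g₂ admits at least one singular couple. Then for every nonempty open subset D of ℝ² there exist positive integers N₁ and N₂ such that g₁^{N₁}(g₂^{N₂}(D)) ∩ D ≠ ∅. -/

import Mathlib

/-- `(x, y)` is a singular couple for a homeomorphism `h` of the plane: there are points
`z k → x` and positive integers `n k → +∞` with `h ^ (n k) (z k) → y`. -/
def SingularCouple (h : (ℝ × ℝ) ≃ₜ (ℝ × ℝ)) (x y : ℝ × ℝ) : Prop :=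
  ∃ z : ℕ → ℝ × ℝ, ∃ n : ℕ → ℕ, (∀ k, 0 < n k) ∧
    Filter.Tendsto z Filter.atTop (nhds x) ∧
    Filter.Tendsto n Filter.atTop Filter.atTop ∧
    Filter.Tendsto (fun k => (h.toEquiv ^ n k) (z k)) Filter.atTop (nhds y)

/-!
Choose `a` and `b` in the group generated by `g₁` and `g₂` with `a x ∈ D` and `b y ∈ D`, where
`(x, y)` is a singular couple of `h = g₁ ∘ g₂`. For infinitely many `n` some point near `x` is sent
by `h ^ n` near `y`, so `b ∘ h ^ n ∘ a⁻¹` sends some point of `D` into `D`. By commutativity this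
map is `g₁ ^ (i + n) ∘ g₂ ^ (j + n)` with `i`, `j` independent of `n`, and for large `n` both
exponents are positive.
-/

open Filter Set Topology

section Group

variable {G : Type*} [Group G] {a b : G}

theorem zpow_mul_zpow_mul_zpow_mul_zpow_of_commute (hab : Commute a b) (i j k l : ℤ) :
    a ^ i * b ^ j * (a ^ k * b ^ l) = a ^ (i + k) * b ^ (j + l) := by
  rw [(hab.symm.zpow_zpow j k).mul_mul_mul_comm, zpow_add, zpow_add]

theorem inv_zpow_mul_zpow_of_commute (hab : Commute a b) (i j : ℤ) :
    (a ^ i * b ^ j)⁻¹ = a ^ (-i) * b ^ (-j) := by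
  rw [(hab.zpow_zpow i j).mul_inv, zpow_neg, zpow_neg]

theorem zpow_mul_zpow_mul_pow_mul_inv_of_commute (hab : Commute a b) (i j k l : ℤ) (n : ℕ) :
    a ^ k * b ^ l * (a * b) ^ n * (a ^ i * b ^ j)⁻¹ = a ^ (k - i + n) * b ^ (l - j + n) := by
  rw [hab.mul_pow, ← zpow_natCast a, ← zpow_natCast b, inv_zpow_mul_zpow_of_commute hab,
    zpow_mul_zpow_mul_zpow_mul_zpow_of_commute hab,
    zpow_mul_zpow_mul_zpow_mul_zpow_of_commute hab]
  congr 2 <;> ring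

end Group

theorem frequently_atTop_prod_of_frequently_add_natCast {P : ℤ → ℤ → Prop} {i j : ℤ}
    (h : ∃ᶠ n : ℕ in atTop, P (i + n) (j + n)) : ∃ᶠ N : ℕ × ℕ in atTop, P N.1 N.2 := by
  rw [frequently_atTop] at h ⊢
  rintro ⟨M₁, M₂⟩
  obtain ⟨n, hn, hP⟩ := h (M₁ + M₂ + i.natAbs + j.natAbs)
  obtain ⟨N₁, hN₁⟩ := Int.eq_ofNat_of_zero_le (a := i + n) (by lia)
  obtain ⟨N₂, hN₂⟩ := Int.eq_ofNat_of_zero_le (a := j + n) (by lia)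
  rw [hN₁, hN₂] at hP
  exact ⟨(N₁, N₂), ⟨by lia, by lia⟩, hP⟩

section Homeomorph

variable {X : Type*} [TopologicalSpace X]

theorem coe_toEquiv_zpow (g : X ≃ₜ X) (n : ℤ) : ⇑(g.toEquiv ^ n) = ⇑(g ^ n) :=
  let toPerm : (X ≃ₜ X) →* Equiv.Perm X :=
    { toFun := Homeomorph.toEquiv, map_one' := rfl, map_mul' := fun _ _ => rfl }
  congrArg DFunLike.coe (map_zpow toPerm g n).symm

theorem coe_homeomorph_pow (g : X ≃ₜ X) (n : ℕ) : ⇑(g ^ n) = g^[n] := by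
  rw [← zpow_natCast, ← coe_toEquiv_zpow, zpow_natCast, Equiv.Perm.coe_pow, g.coe_toEquiv]

/-- Singular couples for a self-map of a topological space: arbitrarily large iterates of `f` send
points arbitrarily close to `x` to points arbitrarily close to `y`. The formulation by cluster
points replaces sequences, which would be too restrictive without first countability. -/
def IsSingularPair (f : X → X) (x y : X) : Prop :=
  MapClusterPt y (atTop ×ˢ 𝓝 x) fun p : ℕ × X => f^[p.1] p.2

theorem SingularCouple.isSingularPair {h : (ℝ × ℝ) ≃ₜ (ℝ × ℝ)} {x y : ℝ × ℝ}
    (hxy : SingularCouple h x y) : IsSingularPair h x y := by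
  obtain ⟨z, n, -, hz, hn, hzy⟩ := hxy
  exact .of_comp (hn.prodMk hz) hzy.mapClusterPt

namespace IsSingularPair

variable {x y : X} {U V : Set X}

theorem frequently_iterate_image_inter_nonempty {f : X → X} (hf : IsSingularPair f x y)
    (hU : U ∈ 𝓝 x) (hV : V ∈ 𝓝 y) : ∃ᶠ n in atTop, (f^[n] '' U ∩ V).Nonempty := by
  have hVU : ∃ᶠ p : ℕ × X in atTop ×ˢ 𝓝 x, f^[p.1] p.2 ∈ V ∧ p.2 ∈ U :=
    (hf.frequently hV).and_eventually (tendsto_snd.eventually hU)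
  exact tendsto_fst.frequently (hVU.mono fun p hp => ⟨_, mem_image_of_mem _ hp.2, hp.1⟩)

theorem frequently_mul_pow_mul_inv_image_inter_nonempty {h a b : X ≃ₜ X}
    (hxy : IsSingularPair h x y) (hU : IsOpen U) (hV : IsOpen V) (hax : a x ∈ U) (hby : b y ∈ V) :
    ∃ᶠ n : ℕ in atTop, (⇑(b * h ^ n * a⁻¹) '' U ∩ V).Nonempty := by
  have ha : a ⁻¹' U ∈ 𝓝 x := (hU.preimage a.continuous).mem_nhds hax
  have hb : b ⁻¹' V ∈ 𝓝 y := (hV.preimage b.continuous).mem_nhds hby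
  refine (hxy.frequently_iterate_image_inter_nonempty ha hb).mono ?_
  rintro n ⟨_, ⟨z, hz, rfl⟩, hbz⟩
  have hmap : (b * h ^ n * a⁻¹) (a z) = b (h^[n] z) := by
    rw [← coe_homeomorph_pow]
    exact congrArg (b ∘ ⇑(h ^ n)) (a.symm_apply_apply z)
  exact ⟨_, ⟨a z, hz, rfl⟩, hmap ▸ hbz⟩

end IsSingularPair

theorem positive_return_of_minimal_and_singular_general {g₁ g₂ : X ≃ₜ X} (hcomm : Commute g₁ g₂)
    {x y : X} (hx : Dense (range fun n : ℤ × ℤ => (g₁ ^ n.1 * g₂ ^ n.2) x))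
    (hy : Dense (range fun n : ℤ × ℤ => (g₁ ^ n.1 * g₂ ^ n.2) y))
    (hxy : IsSingularPair (g₁ * g₂) x y) {D : Set X} (hD : IsOpen D) (hDne : D.Nonempty) :
    ∃ᶠ N : ℕ × ℕ in atTop, (⇑(g₁ ^ (N.1 : ℤ) * g₂ ^ (N.2 : ℤ)) '' D ∩ D).Nonempty := by
  obtain ⟨_, ⟨⟨i, j⟩, rfl⟩, hxD⟩ := hx.exists_mem_open hD hDne
  obtain ⟨_, ⟨⟨k, l⟩, rfl⟩, hyD⟩ := hy.exists_mem_open hD hDne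
  have hreturn := hxy.frequently_mul_pow_mul_inv_image_inter_nonempty hD hD hxD hyD
  simp only [zpow_mul_zpow_mul_pow_mul_inv_of_commute hcomm] at hreturn
  exact frequently_atTop_prod_of_frequently_add_natCast
    (P := fun m n => (⇑(g₁ ^ m * g₂ ^ n) '' D ∩ D).Nonempty) hreturn

end Homeomorph

/-- If `g₁`, `g₂` are commuting homeomorphisms of the plane generating a minimal
ℤ²-action `(n₁, n₂) ↦ g₁^{n₁} ∘ g₂^{n₂}`, and `g₁ ∘ g₂` admits a singular couple, then for
every nonempty open set `D` there are positive integers `N₁`, `N₂` with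
`g₁^{N₁} (g₂^{N₂} (D)) ∩ D ≠ ∅`. -/
theorem positive_return_of_minimal_and_singular
    (g₁ g₂ : (ℝ × ℝ) ≃ₜ (ℝ × ℝ))
    (hcomm : ∀ z : ℝ × ℝ, g₁ (g₂ z) = g₂ (g₁ z))
    (hmin : ∀ x : ℝ × ℝ,
      Dense (Set.range fun n : ℤ × ℤ => (g₁.toEquiv ^ n.1) ((g₂.toEquiv ^ n.2) x)))
    (hsing : ∃ x y : ℝ × ℝ, SingularCouple (g₂.trans g₁) x y)
    (D : Set (ℝ × ℝ)) (hD : IsOpen D) (hDne : D.Nonempty) :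
    ∃ N₁ N₂ : ℕ, 0 < N₁ ∧ 0 < N₂ ∧
      ((⇑(g₁.toEquiv ^ (N₁ : ℤ)) '' (⇑(g₂.toEquiv ^ (N₂ : ℤ)) '' D)) ∩ D).Nonempty := by
  obtain ⟨x, y, hxy⟩ := hsing
  simp only [coe_toEquiv_zpow, ← image_comp] at hmin ⊢
  obtain ⟨N, ⟨hN₁, hN₂⟩, hND⟩ := frequently_atTop.1 (positive_return_of_minimal_and_singular_general
    (Homeomorph.ext hcomm) (hmin x) (hmin y) hxy.isSingularPair hD hDne) (1, 1)
  exact ⟨N.1, N.2, hN₁, hN₂, hND⟩
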